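/- Let 0 ≤ q < 1 and let Ω ∈ U_q(s_p, M_p) be a p×p matrix with inverse Σ = Ω^{-1}. Let Σ̂ ∈ ℝ^{p×p} be a symmetric matrix and let λ ≥ 0 satisfy λ ≥ 3‖Ω‖_{L1}‖Σ̂ − Σ‖_∞ and ‖Ω‖_{L1}^{−q} λ^{1−q} s_p ≤ 1/2. Let Ω̂ = (β̂_1,…,β̂_p) where, for each i, β̂_i is a SCIO column estimator (a global minimizer of β ↦ (1/2)βᵀΣ̂β − e_iᵀβ + λ|β|_1), and let Ω̃ be the symmetrization of Ω̂. Then ‖Ω̃ − Ω‖_{L1} ≤ 66 (λ ‖Ω‖_{L1})^{1−q} s_p. -/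

import Mathlib

open Matrix
open scoped BigOperators

/-- The ℓ1 norm of a vector in ℝ^p. -/
noncomputable def vecL1 {p : ℕ} (a : Fin p → ℝ) : ℝ := ∑ i, |a i|

/-- The entrywise supremum norm of a p×p matrix. -/
noncomputable def matLinf {p : ℕ} (A : Matrix (Fin p) (Fin p) ℝ) : ℝ := ⨆ i, ⨆ j, |A i j|

/-- The maximum absolute column-sum norm of a p×p matrix. -/
noncomputable def matL1 {p : ℕ} (A : Matrix (Fin p) (Fin p) ℝ) : ℝ := ⨆ j, ∑ i, |A i j|

/-- The SCIO objective function β ↦ (1/2)βᵀ Σ̂ β − eᵀβ + λ|β|₁. -/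
noncomputable def scioObj {p : ℕ} (S : Matrix (Fin p) (Fin p) ℝ) (e : Fin p → ℝ)
    (lam : ℝ) (β : Fin p → ℝ) : ℝ :=
  (1 / 2) * (β ⬝ᵥ S.mulVec β) - e ⬝ᵥ β + lam * vecL1 β

/-- Symmetrization of a matrix: ω̃_ij = β̂_ij if |β̂_ij| ≤ |β̂_ji|, and β̂_ji otherwise. -/
noncomputable def symmetrize {p : ℕ} (A : Matrix (Fin p) (Fin p) ℝ) : Matrix (Fin p) (Fin p) ℝ :=
  fun i j => if |A i j| ≤ |A j i| then A i j else A j i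

theorem sum_abs_col_le_matL1 {p : ℕ} (A : Matrix (Fin p) (Fin p) ℝ) (j : Fin p) :
    ∑ i, |A i j| ≤ matL1 A :=
  le_ciSup (f := fun j => ∑ i, |A i j|) (Set.finite_range _).bddAbove j

theorem abs_le_matLinf {p : ℕ} (A : Matrix (Fin p) (Fin p) ℝ) (i j : Fin p) :
    |A i j| ≤ matLinf A :=
  (le_ciSup (f := fun j => |A i j|) (Set.finite_range _).bddAbove j).trans
    (le_ciSup (f := fun i => ⨆ j, |A i j|) (Set.finite_range _).bddAbove i)

theorem vecL1_nonneg {p : ℕ} (v : Fin p → ℝ) : 0 ≤ vecL1 v :=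
  Finset.sum_nonneg fun _ _ => abs_nonneg _

theorem vecL1_add_le {p : ℕ} (v w : Fin p → ℝ) : vecL1 (v + w) ≤ vecL1 v + vecL1 w := by
  unfold vecL1
  rw [← Finset.sum_add_distrib]
  exact Finset.sum_le_sum fun i _ => abs_add_le _ _

theorem vecL1_smul {p : ℕ} (c : ℝ) (v : Fin p → ℝ) : vecL1 (c • v) = |c| * vecL1 v := by
  simp [vecL1, abs_mul, Finset.mul_sum]

theorem vecL1_single {p : ℕ} (k : Fin p) (c : ℝ) : vecL1 (Pi.single k c) = |c| := by
  unfold vecL1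
  rw [Finset.sum_eq_single k]
  · simp
  · intro i _ hi
    simp [Pi.single_eq_of_ne hi]
  · simp

theorem abs_dotProduct_le {p : ℕ} (v w : Fin p → ℝ) (c : ℝ) (hw : ∀ i, |w i| ≤ c) :
    |v ⬝ᵥ w| ≤ c * vecL1 v := by
  unfold vecL1 dotProduct
  rw [Finset.mul_sum]
  refine (Finset.abs_sum_le_sum_abs _ _).trans (Finset.sum_le_sum fun i _ => ?_)
  rw [abs_mul, mul_comm]
  exact mul_le_mul_of_nonneg_right (hw i) (abs_nonneg _)

theorem abs_mulVec_le_matLinf {p : ℕ} (A : Matrix (Fin p) (Fin p) ℝ) (v : Fin p → ℝ)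
    (i : Fin p) : |(A *ᵥ v) i| ≤ matLinf A * vecL1 v := by
  rw [mulVec, dotProduct_comm]
  exact abs_dotProduct_le v _ _ fun j => abs_le_matLinf A i j

theorem abs_mulVec_le_matL1 {p : ℕ} {A : Matrix (Fin p) (Fin p) ℝ} (hA : A.IsSymm)
    (v : Fin p → ℝ) {c : ℝ} (hc : 0 ≤ c) (hv : ∀ i, |v i| ≤ c) (i : Fin p) :
    |(A *ᵥ v) i| ≤ matL1 A * c := by
  refine (abs_dotProduct_le (fun j => A i j) v c hv).trans ?_
  rw [mul_comm]
  refine mul_le_mul_of_nonneg_right ?_ hc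
  refine le_trans (le_of_eq ?_) (sum_abs_col_le_matL1 A i)
  exact Finset.sum_congr rfl fun j _ => by rw [hA.apply]

theorem nonneg_of_forall_small_quadratic {a b : ℝ}
    (h : ∀ t : ℝ, 0 < t → t ≤ 1 → 0 ≤ t * a + t ^ 2 * b) : 0 ≤ a := by
  by_contra! ha
  have hd : 0 < |b| - a := by have := abs_nonneg b; linarith
  have ht : 0 < -a / (2 * (|b| - a)) := by apply div_pos <;> linarith
  have h1 := h (-a / (2 * (|b| - a))) ht (by
    rw [div_le_one (by linarith)]; have := abs_nonneg b; linarith)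
  set t := -a / (2 * (|b| - a)) with htdef
  have h2 : t * (|b| - a) = -a / 2 := by rw [htdef]; field_simp
  have h3 : 0 ≤ a + t * b := by
    by_contra! h4
    nlinarith [mul_pos ht (neg_pos.mpr h4)]
  nlinarith [mul_le_mul_of_nonneg_left (le_abs_self b) ht.le, mul_pos ht (neg_pos.mpr ha)]

theorem dotProduct_mulVec_add_smul {p : ℕ} {S : Matrix (Fin p) (Fin p) ℝ} (hS : S.IsSymm)
    (b v : Fin p → ℝ) (t : ℝ) :
    (b + t • v) ⬝ᵥ S *ᵥ (b + t • v) =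
      b ⬝ᵥ S *ᵥ b + 2 * t * (v ⬝ᵥ S *ᵥ b) + t ^ 2 * (v ⬝ᵥ S *ᵥ v) := by
  have h : b ⬝ᵥ S *ᵥ v = v ⬝ᵥ S *ᵥ b := by
    rw [dotProduct_mulVec, ← mulVec_transpose, hS.eq, dotProduct_comm]
  simp only [mulVec_add, mulVec_smul, add_dotProduct, dotProduct_add, smul_dotProduct,
    dotProduct_smul, smul_eq_mul, h]
  ring

section Minimizer

variable {p : ℕ} {S : Matrix (Fin p) (Fin p) ℝ} {e b : Fin p → ℝ} {lam : ℝ}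

/-- If the SCIO objective has a global minimizer, its quadratic part is positive semidefinite. -/
theorem quadratic_nonneg_of_scioObj_min
    (hb : ∀ v, scioObj S e lam b ≤ scioObj S e lam v) (v : Fin p → ℝ) :
    0 ≤ v ⬝ᵥ S *ᵥ v := by
  by_contra! hQ
  set Q := v ⬝ᵥ S *ᵥ v with hQdef
  set F := scioObj S e lam b
  set B := lam * vecL1 v - e ⬝ᵥ v with hB
  have key : ∀ c : ℝ, 0 ≤ c → F ≤ c ^ 2 / 2 * Q + c * B := by
    intro c hc
    refine (hb (c • v)).trans (le_of_eq ?_)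
    simp only [scioObj, vecL1_smul, abs_of_nonneg hc, mulVec_smul, smul_dotProduct,
      dotProduct_smul, smul_eq_mul, ← hQdef, hB]
    ring
  have hk := key (1 + 2 * (|B| + |F|) / (-Q)) (by
    have : 0 ≤ 2 * (|B| + |F|) / (-Q) := div_nonneg (by positivity) (by linarith)
    linarith)
  set d := 2 * (|B| + |F|) / (-Q) with hd
  have hd0 : 0 ≤ d := div_nonneg (by positivity) (by linarith)
  have hdQ : d * Q = -2 * (|B| + |F|) := by
    rw [hd]
    field_simp [hQ.ne]
  have h1 : (1 + d) * B ≤ (1 + d) * |B| := mul_le_mul_of_nonneg_left (le_abs_self B) (by linarith)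
  have h2 : (1 + d) ^ 2 / 2 * Q = (1 + d) * (Q / 2 - (|B| + |F|)) := by
    linear_combination (1 + d) / 2 * hdQ
  have h3 := neg_abs_le F
  nlinarith [abs_nonneg F, mul_nonneg hd0 (abs_nonneg F), mul_nonneg hd0 (neg_nonneg.mpr hQ.le)]

theorem dotProduct_gradient_ge_of_scioObj_min (hS : S.IsSymm)
    (hb : ∀ v, scioObj S e lam b ≤ scioObj S e lam v) (hlam : 0 ≤ lam) (v : Fin p → ℝ) (r : ℝ)
    (hr : ∀ t : ℝ, 0 < t → t ≤ 1 → vecL1 (b + t • v) ≤ vecL1 b + t * r) :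
    0 ≤ v ⬝ᵥ (S *ᵥ b - e) + lam * r := by
  refine nonneg_of_forall_small_quadratic (b := v ⬝ᵥ S *ᵥ v / 2) fun t ht ht1 => ?_
  have h := hb (b + t • v)
  have h2 := mul_le_mul_of_nonneg_left (hr t ht ht1) hlam
  simp only [scioObj, dotProduct_mulVec_add_smul hS] at h
  rw [dotProduct_add, dotProduct_smul, smul_eq_mul] at h
  rw [dotProduct_sub, dotProduct_comm v e]
  linarith

theorem abs_gradient_le_of_scioObj_min (hS : S.IsSymm)
    (hb : ∀ v, scioObj S e lam b ≤ scioObj S e lam v) (hlam : 0 ≤ lam) (k : Fin p) :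
    |(S *ᵥ b - e) k| ≤ lam := by
  have key : ∀ c : ℝ, |c| = 1 → 0 ≤ c * (S *ᵥ b - e) k + lam := by
    intro c hc
    have h := dotProduct_gradient_ge_of_scioObj_min hS hb hlam (Pi.single k c) 1
      fun t ht _ => by
        refine (vecL1_add_le _ _).trans ?_
        rw [vecL1_smul, vecL1_single, hc, abs_of_pos ht]
    rwa [single_dotProduct, mul_one] at h
  have h1 := key 1 (by simp)
  have h2 := key (-1) (by simp)
  exact abs_le.mpr ⟨by linarith, by linarith⟩

theorem sub_dotProduct_gradient_le_of_scioObj_min (hS : S.IsSymm)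
    (hb : ∀ v, scioObj S e lam b ≤ scioObj S e lam v) (hlam : 0 ≤ lam) (w : Fin p → ℝ) :
    (b - w) ⬝ᵥ (S *ᵥ b - e) ≤ lam * (vecL1 w - vecL1 b) := by
  have h := dotProduct_gradient_ge_of_scioObj_min hS hb hlam (w - b) (vecL1 w - vecL1 b)
    fun t ht ht1 => by
      have : b + t • (w - b) = (1 - t) • b + t • w := by
        ext i; simp; ring
      rw [this]
      refine (vecL1_add_le _ _).trans (le_of_eq ?_)
      rw [vecL1_smul, vecL1_smul, abs_of_pos ht, abs_of_nonneg (by linarith)]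
      ring
  rw [← neg_sub b w, neg_dotProduct] at h
  linarith

end Minimizer

section Threshold

variable {p : ℕ} {q s t : ℝ} {w : Fin p → ℝ}

theorem card_large_mul_le (ht : 0 < t) (hq0 : 0 ≤ q) (hw : ∑ i, |w i| ^ q ≤ s) :
    ((Finset.univ.filter fun i => t ≤ |w i|).card : ℝ) * t ≤ t ^ (1 - q) * s := by
  have h1 : ((Finset.univ.filter fun i => t ≤ |w i|).card : ℝ) * t ^ q ≤ s := by
    rw [← nsmul_eq_mul]
    refine (Finset.card_nsmul_le_sum _ (fun i => |w i| ^ q) _ fun i hi => ?_).trans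
      ((Finset.sum_le_univ_sum_of_nonneg fun i => by positivity).trans hw)
    exact Real.rpow_le_rpow ht.le (Finset.mem_filter.mp hi).2 hq0
  have h2 : t ^ (1 - q) * t ^ q = t := by
    rw [← Real.rpow_add ht]; simp
  calc _ = t ^ (1 - q) * (((Finset.univ.filter fun i => t ≤ |w i|).card : ℝ) * t ^ q) := by
        linear_combination -((Finset.univ.filter fun i => t ≤ |w i|).card : ℝ) * h2
    _ ≤ _ := mul_le_mul_of_nonneg_left h1 (by positivity)

theorem sum_small_abs_le (ht : 0 < t) (hq1 : q < 1) (hw : ∑ i, |w i| ^ q ≤ s) :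
    ∑ i with ¬ t ≤ |w i|, |w i| ≤ t ^ (1 - q) * s := by
  calc ∑ i with ¬ t ≤ |w i|, |w i|
      ≤ ∑ i with ¬ t ≤ |w i|, t ^ (1 - q) * |w i| ^ q := by
        refine Finset.sum_le_sum fun i hi => ?_
        have hlt : |w i| ≤ t := (not_le.mp (Finset.mem_filter.mp hi).2).le
        rcases (abs_nonneg (w i)).eq_or_lt with h0 | h0
        · rw [← h0]; positivity
        · calc |w i| = |w i| ^ (1 - q) * |w i| ^ q := by rw [← Real.rpow_add h0]; simp
            _ ≤ _ := mul_le_mul_of_nonneg_right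
              (Real.rpow_le_rpow h0.le hlt (by linarith)) (by positivity)
    _ ≤ ∑ i, t ^ (1 - q) * |w i| ^ q := Finset.sum_le_univ_sum_of_nonneg fun i => by positivity
    _ ≤ _ := by
        rw [← Finset.mul_sum]
        exact mul_le_mul_of_nonneg_left hw (by positivity)

theorem vecL1_eq_large_add_small (v : Fin p → ℝ) :
    vecL1 v = ∑ i with t ≤ |w i|, |v i| + ∑ i with ¬ t ≤ |w i|, |v i| :=
  (Finset.sum_filter_add_sum_filter_not _ _ _).symm

theorem vecL1_sub_vecL1_le (b : Fin p → ℝ) :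
    vecL1 w - vecL1 b ≤ ∑ i with t ≤ |w i|, |(b - w) i|
      - ∑ i with ¬ t ≤ |w i|, |(b - w) i| + 2 * ∑ i with ¬ t ≤ |w i|, |w i| := by
  rw [vecL1_eq_large_add_small (t := t) (w := w) w, vecL1_eq_large_add_small (t := t) (w := w) b]
  have h1 : ∑ i with t ≤ |w i|, |w i| ≤
      ∑ i with t ≤ |w i|, |b i| + ∑ i with t ≤ |w i|, |(b - w) i| := by
    rw [← Finset.sum_add_distrib]
    refine Finset.sum_le_sum fun i _ => ?_
    have := abs_sub_abs_le_abs_sub (w i) (b i)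
    rw [abs_sub_comm] at this
    simp only [Pi.sub_apply]; linarith
  have h2 : ∑ i with ¬ t ≤ |w i|, |(b - w) i| ≤
      ∑ i with ¬ t ≤ |w i|, |b i| + ∑ i with ¬ t ≤ |w i|, |w i| := by
    rw [← Finset.sum_add_distrib]
    exact Finset.sum_le_sum fun i _ => abs_sub (b i) (w i)
  linarith

theorem sum_large_abs_le (v : Fin p → ℝ) {c : ℝ} (hv : ∀ i, |v i| ≤ c) :
    ∑ i with t ≤ |w i|, |v i| ≤ ((Finset.univ.filter fun i => t ≤ |w i|).card : ℝ) * c := by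
  rw [← nsmul_eq_mul]
  exact Finset.sum_le_card_nsmul _ _ _ fun i _ => hv i

end Threshold

section Column

variable {p : ℕ} {Ω S : Matrix (Fin p) (Fin p) ℝ} {lam : ℝ} {b : Fin p → ℝ} {j : Fin p}

theorem mulVec_col_eq_single (hΩ : Ω.PosDef) (j : Fin p) :
    Ω⁻¹ *ᵥ (fun k => Ω k j) = Pi.single j 1 := by
  have h : (fun k => Ω k j) = Ω *ᵥ Pi.single j 1 := by
    ext k; simp
  rw [h, mulVec_mulVec, nonsing_inv_mul _ hΩ.det_pos.ne'.isUnit, one_mulVec]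

/-- The true column nearly solves the estimating equation. -/
theorem abs_gradient_col_le (hΩ : Ω.PosDef)
    (hlam1 : 3 * matL1 Ω * matLinf (S - Ω⁻¹) ≤ lam) (k : Fin p) :
    |(S *ᵥ (fun k => Ω k j) - Pi.single j 1 : Fin p → ℝ) k| ≤ lam / 3 := by
  rw [← mulVec_col_eq_single hΩ j, ← sub_mulVec]
  refine (abs_mulVec_le_matLinf _ _ k).trans ?_
  have h0 : 0 ≤ matLinf (S - Ω⁻¹) := (abs_nonneg _).trans (abs_le_matLinf _ k k)
  have h1 : vecL1 (fun k => Ω k j) ≤ matL1 Ω := sum_abs_col_le_matL1 Ω j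
  nlinarith [mul_le_mul_of_nonneg_left h1 h0]

theorem abs_sub_col_le (hΩsym : Ω.IsSymm) (hΩ : Ω.PosDef) (hS : S.IsSymm) (hlam : 0 ≤ lam)
    (hlam1 : 3 * matL1 Ω * matLinf (S - Ω⁻¹) ≤ lam)
    (hb : ∀ v, scioObj S (Pi.single j 1) lam b ≤ scioObj S (Pi.single j 1) lam v) (k : Fin p) :
    |(b - fun k => Ω k j) k| ≤ 4 / 3 * (lam * matL1 Ω) +
      lam / 3 * vecL1 (b - fun k => Ω k j) := by
  set w : Fin p → ℝ := fun k => Ω k j with hw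
  set h := b - w with hh
  have hε : 0 ≤ matLinf (S - Ω⁻¹) := (abs_nonneg _).trans (abs_le_matLinf _ k k)
  have hx := vecL1_nonneg h
  have hinv : h = Ω *ᵥ (Ω⁻¹ *ᵥ h) := by
    rw [mulVec_mulVec, mul_nonsing_inv _ hΩ.det_pos.ne'.isUnit, one_mulVec]
  have hdec : Ω⁻¹ *ᵥ h = (S *ᵥ b - Pi.single j 1) - (S *ᵥ w - Pi.single j 1)
      - (S - Ω⁻¹) *ᵥ h := by
    rw [sub_mulVec, hh, mulVec_sub S]; abel
  have hbd : ∀ i, |(Ω⁻¹ *ᵥ h) i| ≤ 4 / 3 * lam + matLinf (S - Ω⁻¹) * vecL1 h := by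
    intro i
    rw [hdec]
    have h1 := abs_gradient_le_of_scioObj_min hS hb hlam i
    have h2 := abs_gradient_col_le (j := j) hΩ hlam1 i
    have h3 := abs_mulVec_le_matLinf (S - Ω⁻¹) h i
    rw [Pi.sub_apply, Pi.sub_apply (_ - _)]
    rw [← hw] at h2
    rw [abs_le] at *
    constructor <;> linarith
  rw [hinv]
  refine (abs_mulVec_le_matL1 hΩsym _ (by positivity) hbd k).trans ?_
  rw [← hinv]
  nlinarith [mul_le_mul_of_nonneg_right hlam1 hx]

/-- The column estimator is within `14 (λ ‖Ω‖)^(1-q) s` of the true column in `ℓ1`. -/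
theorem vecL1_sub_col_le {q s : ℝ} (hq0 : 0 ≤ q) (hq1 : q < 1)
    (hΩsym : Ω.IsSymm) (hΩ : Ω.PosDef) (hS : S.IsSymm) (hlam : 0 < lam) (hL : 0 < matL1 Ω)
    (hΩs : ∑ i, |Ω i j| ^ q ≤ s)
    (hlam1 : 3 * matL1 Ω * matLinf (S - Ω⁻¹) ≤ lam)
    (hD : (lam * matL1 Ω) ^ (1 - q) * s ≤ matL1 Ω / 2)
    (hb : ∀ v, scioObj S (Pi.single j 1) lam b ≤ scioObj S (Pi.single j 1) lam v) :
    vecL1 (b - fun k => Ω k j) ≤ 14 * ((lam * matL1 Ω) ^ (1 - q) * s) := by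
  have ht : 0 < lam * matL1 Ω := mul_pos hlam hL
  have hcard := card_large_mul_le (w := fun k => Ω k j) ht hq0 hΩs
  have hsmall := sum_small_abs_le (w := fun k => Ω k j) ht hq1 hΩs
  have hmax := abs_sub_col_le hΩsym hΩ hS hlam.le hlam1 hb
  have hlarge := sum_large_abs_le (t := lam * matL1 Ω) (w := fun k => Ω k j) _ hmax
  have hl1 := vecL1_sub_vecL1_le (t := lam * matL1 Ω) (w := fun k => Ω k j) b
  have hsplit := vecL1_eq_large_add_small (t := lam * matL1 Ω) (w := fun k => Ω k j)
    (b - fun k => Ω k j)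
  have hgrad := sub_dotProduct_gradient_le_of_scioObj_min hS hb hlam.le (fun k => Ω k j)
  have hquad := quadratic_nonneg_of_scioObj_min hb (b - fun k => Ω k j)
  have htrue := abs_dotProduct_le (b - fun k => Ω k j) _ _
    (abs_gradient_col_le (j := j) hΩ hlam1)
  set w : Fin p → ℝ := fun k => Ω k j with hw
  have hx := vecL1_nonneg (b - w)
  have hdec : S *ᵥ (b - w) = (S *ᵥ b - Pi.single j 1) - (S *ᵥ w - Pi.single j 1) := by
    rw [mulVec_sub]; abel
  rw [hdec, dotProduct_sub] at hquad
  have hcone : 0 ≤ lam * (vecL1 w - vecL1 b + vecL1 (b - w) / 3) := by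
    have := (abs_le.mp htrue).1
    linarith
  have hcone' := nonneg_of_mul_nonneg_right hcone hlam
  have hcardlam : ((Finset.univ.filter fun i => lam * matL1 Ω ≤ |w i|).card : ℝ) * lam ≤ 1 / 2 := by
    refine le_of_mul_le_mul_right ?_ hL
    linarith
  have hA := mul_le_mul_of_nonneg_right hcardlam hx
  linarith

end Column

theorem abs_symmetrize_le {p : ℕ} (A : Matrix (Fin p) (Fin p) ℝ) (i j : Fin p) :
    |symmetrize A i j| ≤ |A i j| := by
  unfold symmetrize
  split_ifs with h
  · exact le_rfl
  · exact (not_le.mp h).le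

theorem abs_symmetrize_sub_le {p : ℕ} {A B : Matrix (Fin p) (Fin p) ℝ} (hB : B.IsSymm) {c : ℝ}
    (h : ∀ i j, |A i j - B i j| ≤ c) (i j : Fin p) : |symmetrize A i j - B i j| ≤ c := by
  unfold symmetrize
  split_ifs
  · exact h i j
  · rw [← hB.apply i j]; exact h j i

/-- Theorem 2, matrix L1-norm bound: the symmetrized SCIO estimator Ω̃ satisfies
‖Ω̃ − Ω‖_{L1} ≤ 66 (λ ‖Ω‖_{L1})^{1−q} s_p. -/
theorem scio_matrix_L1_bound {p : ℕ} (q s M : ℝ) (hq0 : 0 ≤ q) (hq1 : q < 1)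
    (hs : 0 < s) (hM : 0 < M)
    (Ω : Matrix (Fin p) (Fin p) ℝ) (hΩsym : Ω.IsSymm) (hΩpd : Ω.PosDef)
    (hΩs : ∀ j, ∑ i, |Ω i j| ^ q ≤ s) (hΩM : matL1 Ω ≤ M)
    (Shat : Matrix (Fin p) (Fin p) ℝ) (hSsym : Shat.IsSymm)
    (lam : ℝ) (hlam0 : 0 ≤ lam)
    (hlam1 : 3 * matL1 Ω * matLinf (Shat - Ω⁻¹) ≤ lam)
    (hlam2 : (matL1 Ω) ^ (-q) * lam ^ (1 - q) * s ≤ 1 / 2)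
    (Ωhat : Matrix (Fin p) (Fin p) ℝ)
    (hmin : ∀ (i : Fin p) (β : Fin p → ℝ),
      scioObj Shat (Pi.single i 1) lam (fun k => Ωhat k i) ≤
        scioObj Shat (Pi.single i 1) lam β) :
    matL1 (symmetrize Ωhat - Ω) ≤ 66 * (lam * matL1 Ω) ^ (1 - q) * s := by
  have hL0 : 0 ≤ matL1 Ω := Real.iSup_nonneg fun j => Finset.sum_nonneg fun i _ => abs_nonneg _
  have hD0 : 0 ≤ (lam * matL1 Ω) ^ (1 - q) * s :=
    mul_nonneg (Real.rpow_nonneg (mul_nonneg hlam0 hL0) _) hs.le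
  rw [mul_assoc]
  refine Real.iSup_le (fun j => ?_) (by linarith)
  have hL : 0 < matL1 Ω :=
    calc 0 < |Ω j j| := abs_pos.mpr hΩpd.diag_pos.ne'
      _ ≤ ∑ i, |Ω i j| :=
        Finset.single_le_sum (f := fun i => |Ω i j|) (fun i _ => abs_nonneg _) (Finset.mem_univ j)
      _ ≤ matL1 Ω := sum_abs_col_le_matL1 Ω j
  have hentry := fun j => abs_sub_col_le hΩsym hΩpd hSsym hlam0 hlam1 (hmin j)
  simp only [Matrix.sub_apply]
  rcases hlam0.eq_or_lt with hz | hlam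
  · have hzero : ∀ i j, |Ωhat i j - Ω i j| ≤ 0 := by
      intro i j
      have := hentry j i
      rw [← hz] at this
      simpa using this
    have := abs_symmetrize_sub_le hΩsym hzero
    calc ∑ i, |symmetrize Ωhat i j - Ω i j| ≤ 0 := Finset.sum_nonpos fun i _ => this i j
      _ ≤ _ := by linarith
  have hD : (lam * matL1 Ω) ^ (1 - q) * s ≤ matL1 Ω / 2 := by
    have h1 : (lam * matL1 Ω) ^ (1 - q) * s =
        (matL1 Ω ^ (-q) * lam ^ (1 - q) * s) * matL1 Ω := by
      rw [Real.mul_rpow hlam0 hL0, sub_eq_add_neg 1 q, Real.rpow_add hL, Real.rpow_one]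
      ring
    rw [h1]
    nlinarith
  have hcol := fun j => vecL1_sub_col_le hq0 hq1 hΩsym hΩpd hSsym hlam hL (hΩs j) hlam1 hD (hmin j)
  have hunif : ∀ i j, |Ωhat i j - Ω i j| ≤ 11 / 3 * (lam * matL1 Ω) := by
    intro i j
    have h1 := hentry j i
    simp only [Pi.sub_apply] at h1
    have h2 := mul_le_mul_of_nonneg_left ((hcol j).trans
      (mul_le_mul_of_nonneg_left hD (by norm_num))) hlam0
    linarith
  have ht : 0 < lam * matL1 Ω := mul_pos hlam hL
  have hlarge := sum_large_abs_le (t := lam * matL1 Ω) (w := fun k => Ω k j)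
    (fun i => symmetrize Ωhat i j - Ω i j) fun i => abs_symmetrize_sub_le hΩsym hunif i j
  have hcard := card_large_mul_le (w := fun k => Ω k j) ht hq0 (hΩs j)
  have hsmall := sum_small_abs_le (w := fun k => Ω k j) ht hq1 (hΩs j)
  have hrest : ∑ i with ¬ lam * matL1 Ω ≤ |Ω i j|, |symmetrize Ωhat i j - Ω i j| ≤
      vecL1 ((fun k => Ωhat k j) - fun k => Ω k j)
        + 2 * ∑ i with ¬ lam * matL1 Ω ≤ |Ω i j|, |Ω i j| := by
    calc _ ≤ ∑ i with ¬ lam * matL1 Ω ≤ |Ω i j|, (|Ωhat i j - Ω i j| + 2 * |Ω i j|) := by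
          refine Finset.sum_le_sum fun i _ => ?_
          have h1 := abs_sub (symmetrize Ωhat i j) (Ω i j)
          have h2 := abs_symmetrize_le Ωhat i j
          have h3 := abs_sub_abs_le_abs_sub (Ωhat i j) (Ω i j)
          linarith
      _ ≤ _ := by
          rw [Finset.sum_add_distrib, ← Finset.mul_sum]
          gcongr
          exact Finset.sum_le_univ_sum_of_nonneg
            (f := fun i => |Ωhat i j - Ω i j|) fun i => abs_nonneg _
  have hsplit := vecL1_eq_large_add_small (t := lam * matL1 Ω) (w := fun k => Ω k j)
    (fun i => symmetrize Ωhat i j - Ω i j)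
  have hcolj := hcol j
  simp only [vecL1] at hsplit hrest hcolj
  linarith
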